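/- Let Λ = ℤ_p[[T₁,…,T_d]] and M a finitely generated torsion Λ-module. Then M is pseudo-null if and only if Ext^1_Λ(M, Λ) = 0. -/

import Mathlib

open CategoryTheory

/-- `extModule R M N n` is the `n`-th Ext group `Ext^n_R(M, N)` in the category of
`R`-modules. -/
noncomputable def extModule (R : Type) [CommRing R] (M N : Type) [AddCommGroup M] [Module R M]
    [AddCommGroup N] [Module R N] (n : ℕ) : ModuleCat R :=
  ((Ext R (ModuleCat R) n).obj (Opposite.op (ModuleCat.of R M))).obj (ModuleCat.of R N)

/-- A module over a commutative ring is pseudo-null if its localization at every prime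
of height at most one vanishes. -/
def IsPseudoNull (R : Type) [CommRing R] (M : Type) [AddCommGroup M] [Module R M] : Prop :=
  ∀ (P : Ideal R) (hP : P.IsPrime), Order.height (⟨P, hP⟩ : PrimeSpectrum R) ≤ 1 →
    Subsingleton (LocalizedModule P.primeCompl M)

def CICRing (R : Type) [CommRing R] : Prop :=
  ∀ a b c : R, a ≠ 0 → c ≠ 0 → (∀ n : ℕ, a ^ n ∣ c * b ^ n) → a ∣ b

lemma CICRing.of_dvr (R : Type) [CommRing R] [IsDomain R] [IsDiscreteValuationRing R] :
    CICRing R := by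
  intro a b c ha hc h
  rcases ValuationRing.dvd_total a b with h1 | ⟨t, rfl⟩
  · exact h1
  · have hb : b ≠ 0 := left_ne_zero_of_mul ha
    by_cases ht : IsUnit t
    · obtain ⟨u, rfl⟩ := ht
      exact (Units.mul_right_dvd).2 dvd_rfl
    · exfalso
      obtain ⟨n, hn⟩ := FiniteMultiplicity.of_not_isUnit ht hc
      apply hn
      have := h (n + 1)
      rw [mul_pow, mul_comm c] at this
      exact (mul_dvd_mul_iff_left (pow_ne_zero _ hb)).1 this

lemma CICRing.of_ringEquiv {R S : Type} [CommRing R] [CommRing S] (e : R ≃+* S) (h : CICRing R) :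
    CICRing S := by
  intro a b c ha hc H
  have := h (e.symm a) (e.symm b) (e.symm c) (by simpa using ha) (by simpa using hc) (fun n => by
    have := map_dvd e.symm (H n)
    simpa using this)
  simpa using map_dvd e this

section PS
open PowerSeries
variable {R : Type} [CommRing R] [IsDomain R]

lemma aux_cancel {S : Type} [CommRing S] [IsDomain S] {x A D : S} (hx : Prime x) (hA : ¬ x ∣ A)
    (j : ℕ) (h : A ∣ x ^ j * D) : A ∣ D := by
  obtain ⟨E, hE⟩ := h
  have h1 : x ^ j ∣ E := by
    refine hx.pow_dvd_of_dvd_mul_left j hA ?_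
    rw [← hE]; exact dvd_mul_right _ _
  obtain ⟨F, rfl⟩ := h1
  refine ⟨F, mul_left_cancel₀ (pow_ne_zero j hx.ne_zero) ?_⟩
  rw [hE]; ring

lemma aux_step (hR : CICRing R) {A D : R⟦X⟧} (hA : constantCoeff A ≠ 0)
    (hD : constantCoeff D ≠ 0) (B : R⟦X⟧) (h : ∀ n : ℕ, A ^ n ∣ D * B ^ n) :
    ∃ (q : R) (B₁ : R⟦X⟧), B = A * C q + X * B₁ ∧ ∀ n : ℕ, A ^ n ∣ D * B₁ ^ n := by
  obtain ⟨q, hq⟩ := hR _ (constantCoeff B) _ hA hD (fun n => by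
    simpa using map_dvd (constantCoeff (R := R)) (h n))
  have hX : X ∣ B - A * C q := by
    rw [X_dvd_iff]; simp [hq]
  obtain ⟨B₁, hB₁⟩ := hX
  refine ⟨q, B₁, by rw [← hB₁]; ring, fun n => ?_⟩
  have hXA : ¬ X ∣ A ^ n := by
    rw [X_dvd_iff]; simp [hA]
  refine aux_cancel X_prime hXA n ?_
  have : X ^ n * (D * B₁ ^ n) = D * (B - A * C q) ^ n := by rw [hB₁]; ring
  rw [this, sub_eq_add_neg, add_pow, Finset.mul_sum]
  refine Finset.dvd_sum fun i hi => ?_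
  have hi' : i ≤ n := by simpa [Nat.lt_succ_iff] using hi
  have e : D * (B ^ i * (-(A * C q)) ^ (n - i) * (n.choose i : R⟦X⟧))
      = (D * B ^ i) * A ^ (n - i) * ((-(C q)) ^ (n - i) * (n.choose i : R⟦X⟧)) := by
    rw [show -(A * C q) = A * -(C q) by ring, mul_pow]; ring
  rw [e]
  refine Dvd.dvd.mul_right ?_ _
  calc A ^ n = A ^ i * A ^ (n - i) := by rw [← pow_add]; congr 1; omega
    _ ∣ _ := mul_dvd_mul_right (h i) _

lemma aux_const (hR : CICRing R) {A D : R⟦X⟧} (hA : constantCoeff A ≠ 0)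
    (hD : constantCoeff D ≠ 0) (B : R⟦X⟧) (h : ∀ n : ℕ, A ^ n ∣ D * B ^ n) : A ∣ B := by
  choose q N hN hN' using fun B : {B : R⟦X⟧ // ∀ n : ℕ, A ^ n ∣ D * B ^ n} =>
    aux_step hR hA hD B.1 B.2
  let s : ℕ → {B : R⟦X⟧ // ∀ n : ℕ, A ^ n ∣ D * B ^ n} := fun n =>
    Nat.rec ⟨B, h⟩ (fun _ x => ⟨N x, hN' x⟩) n
  let Q : ℕ → R⟦X⟧ := fun n => PowerSeries.mk fun k => q (s (k + n))
  have hQ : ∀ n, Q n = X * Q (n + 1) + C (q (s n)) := by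
    intro n
    conv_lhs => rw [eq_X_mul_shift_add_const (Q n)]
    simp [Q, add_assoc, add_comm 1 n]
  have hs : ∀ n, (s n).1 = A * C (q (s n)) + X * (s (n + 1)).1 := fun n => hN (s n)
  have hd : ∀ k n, X ^ k ∣ (s n).1 - A * Q n := by
    intro k
    induction k with
    | zero => intro n; simp
    | succ k ih =>
      intro n
      have : (s n).1 - A * Q n = X * ((s (n + 1)).1 - A * Q (n + 1)) := by
        rw [hs n, hQ n]; ring
      rw [this, pow_succ']
      exact mul_dvd_mul_left _ (ih (n + 1))
  refine ⟨Q 0, sub_eq_zero.1 ?_⟩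
  ext k
  exact X_pow_dvd_iff.1 (hd (k + 1) 0) k (Nat.lt_succ_self k)

lemma aux_decomp (A : R⟦X⟧) (hA : A ≠ 0) : ∃ (k : ℕ) (A' : R⟦X⟧), A = X ^ k * A' ∧ ¬ X ∣ A' := by
  have : FiniteMultiplicity (X : R⟦X⟧) A := by
    by_contra hcon
    apply hA
    ext k
    have : X ^ (k + 1) ∣ A := by
      by_contra h2; exact hcon ⟨k, h2⟩
    exact X_pow_dvd_iff.1 this k (Nat.lt_succ_self k)
  obtain ⟨c, hc, hc'⟩ := this.exists_eq_pow_mul_and_not_dvd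
  exact ⟨_, c, hc, hc'⟩

lemma CICRing.powerSeries (hR : CICRing R) : CICRing R⟦X⟧ := by
  intro A B D hA hD h
  by_cases hB : B = 0
  · simp [hB]
  obtain ⟨k, A, rfl, hA'⟩ := aux_decomp A hA
  obtain ⟨l, B, rfl, hB'⟩ := aux_decomp B hB
  obtain ⟨m, D, rfl, hD'⟩ := aux_decomp D hD
  have hX : Prime (X : R⟦X⟧) := X_prime
  have e : ∀ n : ℕ, X ^ m * D * (X ^ l * B) ^ n = X ^ (m + l * n) * (D * B ^ n) := by
    intro n; rw [mul_pow, pow_add, pow_mul]; ring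
  have hkl : k ≤ l := by
    have h1 := h (m + 1)
    rw [e, mul_pow, ← pow_mul] at h1
    have h2 : X ^ (k * (m + 1)) ∣ X ^ (m + l * (m + 1)) * (D * B ^ (m + 1)) :=
      (dvd_mul_right _ _).trans h1
    have h3 : ¬ X ∣ D * B ^ (m + 1) := fun hc => by
      rcases hX.dvd_or_dvd hc with hc | hc
      · exact hD' hc
      · exact hB' (hX.dvd_of_dvd_pow hc)
    have h4 := hX.pow_dvd_of_dvd_mul_right _ h3 h2
    have h5 := (pow_dvd_pow_iff hX.ne_zero hX.not_isUnit).1 h4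
    by_contra hlt
    have : l + 1 ≤ k := by omega
    nlinarith
  refine mul_dvd_mul (pow_dvd_pow _ hkl) ?_
  rw [X_dvd_iff] at hA' hD'
  refine aux_const hR hA' hD' B fun n => ?_
  refine aux_cancel hX ?_ (m + l * n) ?_
  · rw [X_dvd_iff]; simp [hA']
  · rw [← e]
    exact (by rw [mul_pow]; exact dvd_mul_left _ _ : A ^ n ∣ (X ^ k * A) ^ n).trans (h n)
end PS

lemma CICRing.mvPowerSeries (R : Type) [CommRing R] [IsDomain R] (hR : CICRing R) (d : ℕ) :
    CICRing (MvPowerSeries (Fin d) R) := by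
  induction d with
  | zero => exact .of_ringEquiv (MvPowerSeries.isEmptyEquiv (Fin 0) R).toRingEquiv.symm hR
  | succ n ih =>
    have : IsDomain (MvPowerSeries (Fin n) R) := NoZeroDivisors.to_isDomain _
    exact .of_ringEquiv (MvPowerSeries.finSuccEquiv R n).toRingEquiv.symm ih.powerSeries

lemma CICRing.height_le_one {R : Type} [CommRing R] [IsDomain R] [IsNoetherianRing R]
    (hR : CICRing R) (f g : R) (hf : f ≠ 0) (P : Ideal R) [hP : P.IsPrime]
    (h : ∀ x, x ∈ P ↔ f ∣ x * g) : P.height ≤ 1 := by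
  have hfP : f ∈ P := (h f).2 (dvd_mul_right _ _)
  have hg : ¬ f ∣ g := fun hc => hP.ne_top ((Ideal.eq_top_iff_one P).2 ((h 1).2 (by simpa using hc)))
  have key : ∃ c ∈ P, ∃ s, s ∉ P ∧ c * g = f * s := by
    by_contra hcon
    push Not at hcon
    apply hg
    have : ∀ n : ℕ, ∃ y ∈ P, f * g ^ n = f ^ n * y := by
      intro n
      induction n with
      | zero => exact ⟨f, hfP, by simp⟩
      | succ n ih =>
        obtain ⟨y, hy, e⟩ := ih
        obtain ⟨s, hs⟩ := (h y).1 hy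
        refine ⟨s, ?_, ?_⟩
        · by_contra hsP
          exact hcon y hy s hsP hs
        · rw [pow_succ, ← mul_assoc, e, mul_assoc, hs]; ring
    exact hR f g f hf hf fun n => by
      obtain ⟨y, -, e⟩ := this n
      exact ⟨y, e⟩
  obtain ⟨c, hc, s, hs, hcs⟩ := key
  refine Ideal.height_le_one_of_isPrincipal_of_mem_minimalPrimes (Ideal.span {c}) P ?_
  refine ⟨⟨hP, by simpa [Ideal.span_le] using hc⟩, ?_⟩
  rintro Q ⟨hQ, hcQ⟩ hQP x hx
  have hcQ' : c ∈ Q := hcQ (Ideal.mem_span_singleton_self c)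
  obtain ⟨t, ht⟩ := (h x).1 hx
  have : x * s = t * c := by
    apply mul_left_cancel₀ hf
    calc f * (x * s) = x * (f * s) := by ring
      _ = (x * g) * c := by rw [← hcs]; ring
      _ = _ := by rw [ht]; ring
  have h2 : x * s ∈ Q := this ▸ Q.mul_mem_left t hcQ'
  exact (hQ.mem_or_mem h2).resolve_right fun h3 => hs (hQP h3)
lemma extModule_one_iff {R : Type} [CommRing R] {M N : Type} [AddCommGroup M] [Module R M]
    [AddCommGroup N] [Module R N] (P : ProjectiveResolution (ModuleCat.of R M)) :
    Subsingleton (extModule R M N 1) ↔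
    ∀ ψ : P.complex.X 1 →ₗ[R] N, ψ ∘ₗ (P.complex.d 2 1).hom = 0 →
      ∃ χ : P.complex.X 0 →ₗ[R] N, χ ∘ₗ (P.complex.d 1 0).hom = ψ := by
  unfold extModule
  rw [← ModuleCat.isZero_iff_subsingleton, (P.isoExt 1 (ModuleCat.of R N)).isZero_iff,
    ← HomologicalComplex.exactAt_iff_isZero_homology,
    HomologicalComplex.exactAt_iff' _ 0 1 2 (by simp) (by simp),
    ShortComplex.moduleCat_exact_iff]
  constructor
  · intro h ψ hψ
    obtain ⟨x, hx⟩ := h (ModuleCat.ofHom ψ) (by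
      change P.complex.d 2 1 ≫ ModuleCat.ofHom ψ = 0
      ext1
      exact hψ)
    change P.complex.d 1 0 ≫ x = ModuleCat.ofHom ψ at hx
    exact ⟨ModuleCat.Hom.hom x, congrArg ModuleCat.Hom.hom hx⟩
  · intro h x hx
    change P.complex.d 2 1 ≫ x = 0 at hx
    obtain ⟨χ, hχ⟩ := h (ModuleCat.Hom.hom x) (congrArg ModuleCat.Hom.hom hx)
    refine ⟨ModuleCat.ofHom χ, ?_⟩
    change P.complex.d 1 0 ≫ ModuleCat.ofHom χ = x
    ext1
    exact hχ

lemma aux_lin {R : Type} [CommRing R] [IsDomain R] {M P₀ P₁ P₂ : Type} [AddCommGroup M] [Module R M]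
    [AddCommGroup P₀] [Module R P₀] [AddCommGroup P₁] [Module R P₁] [AddCommGroup P₂] [Module R P₂]
    [Module.Projective R P₀] (d₂ : P₂ →ₗ[R] P₁) (d₁ : P₁ →ₗ[R] P₀) (ε : P₀ →ₗ[R] M)
    (h1 : Function.Exact d₂ d₁) (h0 : Function.Exact d₁ ε) (hε : Function.Surjective ε)
    (f : R) (hf : f ≠ 0) (hfM : ∀ m : M, f • m = 0) :
    (∀ ψ : P₁ →ₗ[R] R, ψ ∘ₗ d₂ = 0 → ∃ χ : P₀ →ₗ[R] R, χ ∘ₗ d₁ = ψ) ↔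
      Subsingleton (M →ₗ[R] R ⧸ Ideal.span {f}) := by
  have divf : ∀ {Q : Type} [AddCommGroup Q] [Module R Q] (α : Q →ₗ[R] R),
      (∀ x, f ∣ α x) → ∃ χ : Q →ₗ[R] R, ∀ x, α x = f * χ x := by
    intro Q _ _ α h
    choose χ hχ using h
    exact ⟨{ toFun := χ
             map_add' := fun x y => mul_left_cancel₀ hf (by
               rw [mul_add, ← hχ, ← hχ, ← hχ, map_add])
             map_smul' := fun r x => mul_left_cancel₀ hf (by
               rw [← hχ, map_smul, hχ]; simp only [smul_eq_mul, RingHom.id_apply]; ring) }, hχ⟩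
  constructor
  · intro h
    refine subsingleton_of_forall_eq 0 fun φ => ?_
    obtain ⟨α, hα⟩ := Module.projective_lifting_property (Submodule.mkQ (Ideal.span {f}))
      (φ ∘ₗ ε) (Submodule.mkQ_surjective _)
    have hα' : ∀ x, (Submodule.Quotient.mk (α x) : R ⧸ Ideal.span {f}) = φ (ε x) :=
      fun x => LinearMap.congr_fun hα x
    obtain ⟨ψ, hψ⟩ := divf (α ∘ₗ d₁) (fun x => by
      rw [← Ideal.mem_span_singleton, ← Submodule.Quotient.mk_eq_zero]
      rw [LinearMap.comp_apply, hα', h0.apply_apply_eq_zero, map_zero])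
    obtain ⟨χ, hχ⟩ := h ψ (by
      ext x
      apply mul_left_cancel₀ hf
      simp [← hψ, h1.apply_apply_eq_zero])
    ext m
    obtain ⟨x, rfl⟩ := hε m
    rw [← hα', LinearMap.zero_apply, Submodule.Quotient.mk_eq_zero, Ideal.mem_span_singleton]
    obtain ⟨y, hy⟩ := (h0 (f • x)).1 (by rw [map_smul, hfM])
    refine ⟨χ x, mul_left_cancel₀ hf ?_⟩
    have e1 : α (d₁ y) = f * ψ y := hψ y
    rw [← hχ, LinearMap.comp_apply, hy] at e1
    simpa using e1
  · intro h ψ hψ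
    obtain ⟨β, hβ⟩ := Module.projective_lifting_property d₁.rangeRestrict
      (LinearMap.codRestrict (LinearMap.range d₁) (f • LinearMap.id) (fun x => 
        (h0 (f • x)).1 (by rw [map_smul, hfM]))) d₁.surjective_rangeRestrict
    have hβ' : ∀ x, d₁ (β x) = f • x := fun x => congrArg Subtype.val (LinearMap.congr_fun hβ x)
    have hα : ∀ y, ψ (β (d₁ y)) = f * ψ y := by
      intro y
      obtain ⟨z, hz⟩ := (h1 (β (d₁ y) - f • y)).1 (by rw [map_sub, hβ', map_smul, sub_self])
      have : ψ (d₂ z) = 0 := LinearMap.congr_fun hψ z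
      rw [hz, map_sub, map_smul, sub_eq_zero] at this
      exact this
    obtain ⟨χ, hχ⟩ := divf (ψ ∘ₗ β) (fun x => by
      let γ : P₀ →ₗ[R] R ⧸ Ideal.span {f} := Submodule.mkQ (Ideal.span {f}) ∘ₗ ψ ∘ₗ β
      have hγ : LinearMap.ker ε ≤ LinearMap.ker γ := by
        intro x hx
        obtain ⟨y, rfl⟩ := (h0 x).1 hx
        simp only [γ, LinearMap.mem_ker, LinearMap.comp_apply, hα, Submodule.mkQ_apply,
          Submodule.Quotient.mk_eq_zero]
        exact Ideal.mem_span_singleton.2 (dvd_mul_right _ _)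
      let e := ε.quotKerEquivOfSurjective hε
      have hz := LinearMap.congr_fun (Subsingleton.elim
        ((Submodule.liftQ (LinearMap.ker ε) γ hγ) ∘ₗ e.symm.toLinearMap) 0) (ε x)
      have e2 : e.symm (ε x) = Submodule.Quotient.mk x := by
        rw [LinearEquiv.symm_apply_eq]; rfl
      simp only [LinearMap.comp_apply, LinearEquiv.coe_coe, e2, Submodule.liftQ_apply] at hz
      exact Ideal.mem_span_singleton.1 ((Submodule.Quotient.mk_eq_zero _).1 hz))
    refine ⟨χ, ?_⟩
    ext y
    apply mul_left_cancel₀ hf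
    rw [← hα, LinearMap.comp_apply, ← hχ]; rfl

lemma ext_iff_hom {R : Type} [CommRing R] [IsDomain R] {M : Type} [AddCommGroup M] [Module R M]
    (f : R) (hf : f ≠ 0) (hfM : ∀ m : M, f • m = 0) :
    Subsingleton (extModule R M R 1) ↔ Subsingleton (M →ₗ[R] R ⧸ Ideal.span {f}) := by
  let P := projectiveResolution (ModuleCat.of R M)
  rw [extModule_one_iff P]
  have : Module.Projective R (P.complex.X 0) := by
    rw [IsProjective.iff_projective]; exact P.projective 0
  refine aux_lin (P.complex.d 2 1).hom (P.complex.d 1 0).hom (P.π.f 0).hom ?_ ?_ ?_ f hf hfM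
  · exact (ShortComplex.ShortExact.moduleCat_exact_iff_function_exact _).1 (P.exact_succ 0)
  · exact (ShortComplex.ShortExact.moduleCat_exact_iff_function_exact _).1 P.exact₀
  · exact (ModuleCat.epi_iff_surjective (P.π.f 0)).1 inferInstance

lemma pseudoNull_iff_hom {R : Type} [CommRing R] [IsDomain R] [IsNoetherianRing R]
    (hR : CICRing R) {M : Type} [AddCommGroup M] [Module R M] [Module.Finite R M]
    (f : R) (hf : f ≠ 0) (hfM : ∀ m : M, f • m = 0) :
    IsPseudoNull R M ↔ Subsingleton (M →ₗ[R] R ⧸ Ideal.span {f}) := by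
  constructor
  · intro h
    refine subsingleton_of_forall_eq 0 fun φ => ?_
    by_contra hφ
    have : Nontrivial (LinearMap.range φ) := by
      rw [Submodule.nontrivial_iff_ne_bot]
      exact fun hc => hφ (LinearMap.range_eq_bot.1 hc)
    obtain ⟨P, hPa⟩ := associatedPrimes.nonempty R (LinearMap.range φ)
    obtain ⟨hP, ⟨_, m, rfl⟩, hx⟩ := isAssociatedPrime_iff.1 (AssociatedPrimes.mem_iff.1 hPa)
    have hx' : ∀ r, r ∈ P ↔ r • φ m = 0 := by
      intro r
      rw [hx, Submodule.mem_colon_singleton, Submodule.mem_bot, Subtype.ext_iff]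
      rfl
    obtain ⟨g, hg⟩ := Ideal.Quotient.mk_surjective (φ m)
    have hht : P.height ≤ 1 := hR.height_le_one f g hf P fun r => by
      rw [hx', ← hg, ← Ideal.mem_span_singleton, ← Ideal.Quotient.eq_zero_iff_mem, map_mul]
      rfl
    have hs := h P hP (by
      rw [← PrimeSpectrum.height_eq_orderHeight]; exact hht)
    obtain ⟨s, hs, hsm⟩ := (LocalizedModule.subsingleton_iff.1 hs) m
    exact hs ((hx' s).2 (by rw [← map_smul, hsm, map_zero]))
  · intro h P hP hht
    obtain ⟨r, hrM, hr⟩ := IsSMulRegular.subsingleton_linearMap_iff.1 h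
    by_contra hns
    have hsupp : (⟨P, hP⟩ : PrimeSpectrum R) ∈ Module.support R M := by
      rw [Module.mem_support_iff]
      exact not_subsingleton_iff_nontrivial.1 hns
    have hann : Module.annihilator R M ≤ P := Module.mem_support_iff_of_finite.1 hsupp
    have hfP : f ∈ P := hann (Module.mem_annihilator.2 hfM)
    have hmin : P ∈ (Ideal.span {f}).minimalPrimes := by
      refine ⟨⟨hP, by simpa [Ideal.span_le] using hfP⟩, ?_⟩
      rintro Q ⟨hQ, hfQ⟩ hQP
      by_contra hPQ
      have hfQ' : f ∈ Q := hfQ (Ideal.mem_span_singleton_self f)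
      have h1 : (⟨⊥, Ideal.isPrime_bot⟩ : PrimeSpectrum R) < ⟨Q, hQ⟩ :=
        (bot_lt_iff_ne_bot.2 (fun hc => hf ((Submodule.mem_bot R).1 (hc ▸ hfQ'))) : (⊥ : Ideal R) < Q)
      have h2 : (⟨Q, hQ⟩ : PrimeSpectrum R) < ⟨P, hP⟩ := lt_of_le_not_ge hQP hPQ
      have h3 := Order.height_add_one_le h1
      have h4 := Order.height_add_one_le h2
      have h5 : (1 : ℕ∞) + 1 ≤ 1 := by
        refine le_trans ?_ (h4.trans hht)
        gcongr
        exact le_trans (by simp) h3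
      exact absurd h5 (by decide)
    have hass : P ∈ associatedPrimes R (R ⧸ Ideal.span {f}) := by
      apply Module.associatedPrimes.minimalPrimes_annihilator_subset_associatedPrimes
      rwa [Ideal.annihilator_quotient]
    obtain ⟨-, x, hx⟩ := isAssociatedPrime_iff.1 (AssociatedPrimes.mem_iff.1 hass)
    have hrP : r ∈ P := hann hrM
    rw [hx, Submodule.mem_colon_singleton, Submodule.mem_bot] at hrP
    have hx0 : x = 0 := hr (by simpa using hrP)
    apply hP.ne_top
    rw [hx, hx0]
    simp


/-- For Λ = ℤ_p[[T₁,…,T_d]] and M a finitely generated torsion Λ-module,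
M is pseudo-null if and only if Ext^1_Λ(M,Λ) = 0. -/
theorem stmt_6 (p : ℕ) [Fact p.Prime] (d : ℕ) (hd : 1 ≤ d)
    (M : Type) [AddCommGroup M] [Module (MvPowerSeries (Fin d) ℤ_[p]) M]
    [Module.Finite (MvPowerSeries (Fin d) ℤ_[p]) M]
    (htors : Module.IsTorsion (MvPowerSeries (Fin d) ℤ_[p]) M) :
    IsPseudoNull (MvPowerSeries (Fin d) ℤ_[p]) M ↔
      Subsingleton
        (extModule (MvPowerSeries (Fin d) ℤ_[p]) M (MvPowerSeries (Fin d) ℤ_[p]) 1) := by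
  have : IsDomain (MvPowerSeries (Fin d) ℤ_[p]) := NoZeroDivisors.to_isDomain _
  obtain ⟨f, hfM, hf⟩ := Submodule.annihilator_top_inter_nonZeroDivisors htors
  have hfM' : ∀ m : M, f • m = 0 := fun m => Submodule.mem_annihilator.1 hfM m trivial
  have hf' : f ≠ 0 := nonZeroDivisors.ne_zero hf
  rw [ext_iff_hom f hf' hfM']
  exact pseudoNull_iff_hom (.mvPowerSeries _ (.of_dvr _) d) f hf' hfM'
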